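/- Let G be a controllable graph on n vertices whose walk matrix W satisfies: det(W)/2^⌊n/2⌋ is an odd square-free integer (in particular 2^⌊n/2⌋ divides det(W) and 2^{⌊n/2⌋+1} does not). Let Q be a rational orthogonal matrix with Qe = e such that QᵀA(G)Q is a symmetric (0,1)-matrix with zero diagonal, and let ℓ be the level of Q. Then ℓ = 1 or ℓ = 2. -/

import Mathlib

open Matrix

open scoped Classical in
/-- The (0,1)-adjacency matrix of a simple graph on `Fin n`, with entries in `R`. -/
noncomputable def adjMat {n : ℕ} (R : Type*) [Zero R] [One R] (G : SimpleGraph (Fin n)) :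
    Matrix (Fin n) (Fin n) R :=
  Matrix.of fun i j => if G.Adj i j then 1 else 0

/-- The walk matrix `W = [e, Ae, A²e, …, A^{n−1}e]` of a square matrix `A`,
where `e` is the all-ones vector: the `j`-th column is `A^j e`. -/
noncomputable def walkMatrix {R : Type*} [CommRing R] {n : ℕ} (A : Matrix (Fin n) (Fin n) R) :
    Matrix (Fin n) (Fin n) R :=
  Matrix.of fun i j => (A ^ (j : ℕ) *ᵥ fun _ => 1) i


/-- If `p²` does not divide `det W`, the left kernel of `W` modulo the prime `p` is at most
one-dimensional. -/
theorem exists_dvd_sub_mul_of_dvd_vecMul {ι : Type*} [Fintype ι] [DecidableEq ι]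
    {W : Matrix ι ι ℤ} {p : ℤ} (hp : Prime p) (hdet : ¬ p ^ 2 ∣ W.det)
    {u v : ι → ℤ} (hu : ∀ j, p ∣ (u ᵥ* W) j) (hv : ∀ j, p ∣ (v ᵥ* W) j)
    {i : ι} (hi : ¬ p ∣ u i) : ∃ t : ℤ, ∀ j, p ∣ v j - t * u j := by
  have cross : ∀ j, p ∣ u i * v j - v i * u j := by
    intro j
    by_cases hij : j = i
    · subst hij; exact ⟨0, by ring⟩
    choose y hy using hu
    choose z hz using hv
    have h1 : u i * W.det = p * (W.updateRow i y).det := by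
      have h := Matrix.det_updateRow_sum W i u
      rw [smul_eq_mul] at h
      rw [← h, ← Matrix.det_updateRow_smul]
      congr 2
      ext k
      simp [← hy, Matrix.vecMul, dotProduct]
    set M := W.updateRow i y with hM
    set w : ι → ℤ := fun k => u i * v k - v i * u k with hw
    have h2 : w j * M.det = p * (M.updateRow j (fun k => u i * z k - v i * y k)).det := by
      have h := Matrix.det_updateRow_sum M j w
      rw [smul_eq_mul] at h
      rw [← h, ← Matrix.det_updateRow_smul]
      congr 2
      ext k
      have e1 : ∀ x, w x * M x k = w x * W x k := by
        intro x
        by_cases hx : x = i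
        · subst hx; simp [hw, mul_comm]
        · rw [hM, Matrix.updateRow_ne hx]
      simp only [Finset.sum_apply, Pi.smul_apply, smul_eq_mul, e1]
      have := hy k
      have := hz k
      simp only [Matrix.vecMul, dotProduct] at *
      simp only [hw, sub_mul, Finset.sum_sub_distrib, mul_assoc, ← Finset.mul_sum]
      simp_all only
      ring
    have h3 : p ^ 2 ∣ (w j * u i) * W.det :=
      ⟨_, by rw [mul_assoc, h1, mul_left_comm, h2, ← mul_assoc, ← sq]⟩
    have h4 : p ∣ w j * u i := by
      by_contra hc
      exact hdet (hp.pow_dvd_of_dvd_mul_left 2 hc h3)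
    exact (hp.dvd_or_dvd h4).resolve_right hi
  obtain ⟨a, c, hac⟩ : IsCoprime (u i) p := (hp.coprime_iff_not_dvd.2 hi).symm
  refine ⟨a * v i, fun j => ?_⟩
  obtain ⟨r, hr⟩ := cross j
  exact ⟨a * r + c * v j, by linear_combination a * hr - v j * hac⟩

/-- A shift matrix with arbitrary last column has at most one-dimensional eigenspaces modulo `p`:
an eigenvector vanishing at the last coordinate vanishes. -/
theorem dvd_of_dvd_companion_mulVec {m : ℕ} {p lam : ℤ}
    {C : Matrix (Fin (m + 1)) (Fin (m + 1)) ℤ}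
    (hC : ∀ (k : Fin m) i, C i k.castSucc = if i = k.succ then 1 else 0)
    {h : Fin (m + 1) → ℤ} (hh : ∀ i, p ∣ (C *ᵥ h) i - lam * h i)
    (hlast : p ∣ h (Fin.last m)) (i : Fin (m + 1)) : p ∣ h i := by
  induction i using Fin.reverseInduction with
  | last => exact hlast
  | cast k ih =>
    have h1 := hh k.succ
    have h2 : (C *ᵥ h) k.succ = h k.castSucc + C k.succ (Fin.last m) * h (Fin.last m) := by
      simp [Matrix.mulVec, dotProduct, Fin.sum_univ_castSucc, hC]
    rw [h2] at h1
    obtain ⟨a, ha⟩ := h1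
    obtain ⟨c, hc⟩ := hlast
    obtain ⟨d, hd⟩ := ih
    exact ⟨a - C k.succ (Fin.last m) * c + lam * d, by
      linear_combination ha - C k.succ (Fin.last m) * hc + lam * hd⟩

/-- The walk matrix intertwines `A` with a companion-type matrix. -/
theorem exists_companion_walkMatrix {m : ℕ} (A : Matrix (Fin (m + 1)) (Fin (m + 1)) ℤ) :
    ∃ C : Matrix (Fin (m + 1)) (Fin (m + 1)) ℤ, A * walkMatrix A = walkMatrix A * C ∧
      ∀ (k : Fin m) i, C i k.castSucc = if i = k.succ then 1 else 0 := by
  refine ⟨Matrix.of fun i j => Fin.lastCases (motive := fun _ => ℤ) (-A.charpoly.coeff i)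
    (fun k => if i = k.succ then 1 else 0) j, ?_, ?_⟩
  · have key : A ^ (m + 1) = ∑ k : Fin (m + 1), (-A.charpoly.coeff k) • A ^ (k : ℕ) := by
      have h := Matrix.aeval_self_charpoly A
      have hdeg : A.charpoly.natDegree = m + 1 := by simp [Matrix.charpoly_natDegree_eq_dim]
      have hlead : A.charpoly.coeff (m + 1) = 1 := by
        have h1 := A.charpoly_monic.coeff_natDegree
        rwa [hdeg] at h1
      rw [Polynomial.aeval_eq_sum_range, hdeg, Finset.sum_range_succ, hlead, one_smul,
        Finset.sum_range] at h
      simp only [neg_smul, Finset.sum_neg_distrib]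
      exact (neg_eq_of_add_eq_zero_right h).symm
    have hmul : ∀ i j, (A * walkMatrix A) i j = (A ^ ((j : ℕ) + 1) *ᵥ fun _ => 1) i := by
      intro i j
      rw [pow_succ', ← Matrix.mulVec_mulVec]
      rfl
    ext i j
    rw [hmul]
    induction j using Fin.lastCases with
    | last =>
      simp only [Fin.val_last, key, Matrix.sum_mulVec, Finset.sum_apply, Matrix.mul_apply,
        Matrix.of_apply, Fin.lastCases_last, walkMatrix, Matrix.smul_mulVec, Pi.smul_apply,
        smul_eq_mul]
      exact Finset.sum_congr rfl fun k _ => mul_comm _ _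
    | cast k =>
      simp [Matrix.mul_apply, walkMatrix]
  · intro k i
    simp

/-- An integral vector that is isotropic to second order for both the standard form and the form
of `A`, and lies in the left kernel of the walk matrix modulo `p`, vanishes modulo `p` as soon as
`p` divides the determinant of the walk matrix exactly once. -/
theorem dvd_of_dvd_vecMul_walkMatrix {n : ℕ} {A : Matrix (Fin n) (Fin n) ℤ} (hA : Aᵀ = A)
    {p : ℤ} (hp : Prime p) (hdvd : p ∣ (walkMatrix A).det) (hdet : ¬ p ^ 2 ∣ (walkMatrix A).det)
    {u : Fin n → ℤ} (hu : ∀ j, p ∣ (u ᵥ* walkMatrix A) j) (huu : p ^ 2 ∣ u ⬝ᵥ u)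
    (huA : p ^ 2 ∣ u ⬝ᵥ A *ᵥ u) (i : Fin n) : p ∣ u i := by
  by_contra hi
  obtain _ | m := n
  · exact i.elim0
  obtain ⟨C, hAW, hC⟩ := exists_companion_walkMatrix A
  set W := walkMatrix A with hWdef
  have hW0 : W.det ≠ 0 := fun h => hdet (h ▸ dvd_zero _)
  have hp0 : p ≠ 0 := hp.ne_zero
  obtain ⟨d, hd⟩ := hdvd
  have hpd : ¬ p ∣ d := fun ⟨r, hr⟩ => hdet ⟨r, by rw [hd, hr]; ring⟩
  have hpuu : p ∣ u ⬝ᵥ u := (dvd_pow_self p two_ne_zero).trans huu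
  have hinj : ∀ x y, W *ᵥ x = W *ᵥ y → x = y := fun x y h =>
    Matrix.mulVec_injective_of_det_ne_zero hW0 h
  -- `u` is an eigenvector of `A` modulo `p`
  obtain ⟨lam, hlam⟩ : ∃ t : ℤ, ∀ j, p ∣ (A *ᵥ u) j - t * u j := by
    refine exists_dvd_sub_mul_of_dvd_vecMul hp hdet hu (fun j => ?_) hi
    have : A *ᵥ u = u ᵥ* A := by rw [← Matrix.vecMul_transpose, hA]
    rw [this, Matrix.vecMul_vecMul, hAW, ← Matrix.vecMul_vecMul]
    change p ∣ ∑ k, (u ᵥ* W) k * C k j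
    exact Finset.dvd_sum fun k _ => (hu k).mul_right _
  choose β hβ using hlam
  have hAu : A *ᵥ u = lam • u + p • β := by
    ext j; simp [← hβ]
  have huβ : p ∣ u ⬝ᵥ β := by
    rw [hAu, dotProduct_add, dotProduct_smul, dotProduct_smul, smul_eq_mul, smul_eq_mul,
      dvd_add_right (huu.mul_left _), sq] at huA
    exact (mul_dvd_mul_iff_left hp0).1 huA
  -- membership in the lattice spanned by the columns of `W`, localized at `p`
  have hlat : ∀ x : Fin (m + 1) → ℤ, p ∣ u ⬝ᵥ x → ∃ h, W *ᵥ h = d • x := by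
    intro x hx
    have hadj : ∀ k, p ∣ (W.adjugate *ᵥ x) k := by
      intro k
      obtain ⟨t, ht⟩ := exists_dvd_sub_mul_of_dvd_vecMul (v := W.adjugate k) hp hdet hu
        (fun j => by
          have : (W.adjugate k ᵥ* W) j = (W.adjugate * W) k j := rfl
          rw [this, Matrix.adjugate_mul, hd, Matrix.smul_apply, smul_eq_mul, mul_assoc]
          exact dvd_mul_right _ _) hi
      have : (W.adjugate *ᵥ x) k = (∑ j, (W.adjugate k j - t * u j) * x j) + t * (u ⬝ᵥ x) := by
        simp only [Matrix.mulVec, dotProduct, Finset.mul_sum, ← Finset.sum_add_distrib]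
        exact Finset.sum_congr rfl fun j _ => by ring
      rw [this]
      exact dvd_add (Finset.dvd_sum fun j _ => (ht j).mul_right _) (hx.mul_left _)
    choose h hh using hadj
    refine ⟨h, ?_⟩
    have h1 : W.adjugate *ᵥ x = p • h := funext fun k => by simp [hh]
    have h2 : p • (W *ᵥ h) = p • (d • x) := by
      rw [← Matrix.mulVec_smul, ← h1, Matrix.mulVec_mulVec, Matrix.mul_adjugate,
        Matrix.smul_mulVec, Matrix.one_mulVec, hd, mul_smul]
    exact smul_right_injective _ hp0 h2
  -- lattice elements sent by `A - lam` into `p` times the lattice have eigenvector coordinates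
  have heig : ∀ h g x : Fin (m + 1) → ℤ, W *ᵥ h = g → A *ᵥ g - lam • g = (p * d) • x →
      p ∣ u ⬝ᵥ x → ∀ k, p ∣ (C *ᵥ h) k - lam * h k := by
    intro h g x hg hx hux
    obtain ⟨k', hk'⟩ := hlat x hux
    have h1 : C *ᵥ h - lam • h = p • k' := by
      apply hinj
      rw [Matrix.mulVec_sub, Matrix.mulVec_mulVec, ← hAW, ← Matrix.mulVec_mulVec,
        Matrix.mulVec_smul, Matrix.mulVec_smul, hg, hx, hk', mul_smul]
    intro k
    exact ⟨k' k, by simpa using congrFun h1 k⟩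
  obtain ⟨h, hh⟩ := hlat u hpuu
  have hhC := heig h _ β hh (by
    rw [Matrix.mulVec_smul, hAu, mul_comm p d, mul_smul, smul_add, smul_comm lam d u]
    abel) huβ
  have hadj : ∀ i j, p ∣ W.adjugate i j := by
    intro i₀ j
    set x : Fin (m + 1) → ℤ := Pi.single j 1 with hx
    set g := W.adjugate *ᵥ x with hg
    have hWg : W *ᵥ g = (p * d) • x := by
      rw [hg, Matrix.mulVec_mulVec, Matrix.mul_adjugate, Matrix.smul_mulVec, Matrix.one_mulVec, hd]
    have hgC := heig g _ (A *ᵥ x - lam • x) hWg (by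
      rw [Matrix.mulVec_smul, smul_sub, smul_comm lam]) (by
      have h1 : u ⬝ᵥ A *ᵥ x = (A *ᵥ u) ⬝ᵥ x := by
        rw [Matrix.dotProduct_mulVec, ← Matrix.mulVec_transpose, hA]
      rw [dotProduct_sub, h1, hAu, add_dotProduct, smul_dotProduct, smul_dotProduct,
        dotProduct_smul, add_sub_cancel_left]
      exact dvd_mul_right _ _)
    have hcomb := dvd_of_dvd_companion_mulVec hC (p := p) (lam := lam)
      (h := g (Fin.last m) • h - h (Fin.last m) • g) (fun k => by
        obtain ⟨a, ha⟩ := hhC k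
        obtain ⟨c, hc⟩ := hgC k
        refine ⟨g (Fin.last m) * a - h (Fin.last m) * c, ?_⟩
        simp only [Matrix.mulVec_sub, Matrix.mulVec_smul, Pi.sub_apply, Pi.smul_apply, smul_eq_mul]
        linear_combination g (Fin.last m) * ha - h (Fin.last m) * hc) (by
        simp [mul_comm])
    have hW : p ∣ (W *ᵥ (g (Fin.last m) • h - h (Fin.last m) • g)) i := by
      change p ∣ ∑ k, W i k * (g (Fin.last m) • h - h (Fin.last m) • g) k
      exact Finset.dvd_sum fun k _ => (hcomb k).mul_left _
    have hlast : p ∣ g (Fin.last m) := by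
      rw [Matrix.mulVec_sub, Matrix.mulVec_smul, Matrix.mulVec_smul, hh, hWg] at hW
      simp only [Pi.sub_apply, Pi.smul_apply, smul_eq_mul] at hW
      rw [dvd_sub_left (((dvd_mul_right p d).mul_right _).mul_left _)] at hW
      exact (hp.dvd_or_dvd hW).resolve_right fun hc =>
        (hp.dvd_or_dvd hc).elim hpd hi
    have := dvd_of_dvd_companion_mulVec hC hgC hlast i₀
    simpa [hg, hx] using this
  choose N hN using hadj
  have hWN : W * Matrix.of N = d • (1 : Matrix (Fin (m + 1)) (Fin (m + 1)) ℤ) := by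
    apply smul_right_injective _ hp0
    change p • (W * Matrix.of N) = p • (d • (1 : Matrix (Fin (m + 1)) (Fin (m + 1)) ℤ))
    have h1 : p • Matrix.of N = W.adjugate := by ext i j; simp [hN]
    rw [← Matrix.mul_smul, h1, Matrix.mul_adjugate, hd, mul_smul]
  have hdetN := congrArg Matrix.det hWN
  rw [Matrix.det_mul, Matrix.det_smul, Matrix.det_one, mul_one, hd, mul_assoc] at hdetN
  exact hpd (hp.dvd_of_dvd_pow ⟨_, hdetN.symm⟩)

/-- The quadratic form of a symmetric integral matrix with zero diagonal is even. -/
theorem two_dvd_dotProduct_mulVec {ι : Type*} [Fintype ι] {A : Matrix ι ι ℤ}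
    (hA : Aᵀ = A) (hdiag : ∀ i, A i i = 0) (x : ι → ℤ) : 2 ∣ x ⬝ᵥ A *ᵥ x := by
  have h : ((x ⬝ᵥ A *ᵥ x : ℤ) : ZMod 2) = 0 := by
    have hsum : x ⬝ᵥ A *ᵥ x = ∑ ij : ι × ι, x ij.1 * (A ij.1 ij.2 * x ij.2) := by
      simp [Fintype.sum_prod_type, dotProduct, Matrix.mulVec, Finset.mul_sum]
    rw [hsum, Int.cast_sum]
    refine Finset.sum_involution (fun ij _ => ij.swap) ?_ ?_ (by simp) (by simp)
    · rintro ⟨i, j⟩ -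
      have h1 : A j i = A i j := congrFun (congrFun hA i) j
      have h2 : x j * (A i j * x i) = x i * (A i j * x j) := by ring
      simp only [Prod.swap, h1, h2]
      exact CharTwo.add_self_eq_zero _
    · rintro ⟨i, j⟩ - hne heq
      obtain rfl : j = i := congrArg Prod.fst heq
      simp [hdiag] at hne
  exact (ZMod.intCast_zmod_eq_zero_iff_dvd _ 2).1 h

/-- The number of walks of positive length is even. -/
theorem two_dvd_one_dotProduct_pow_mulVec {ι : Type*} [Fintype ι] [DecidableEq ι]
    {A : Matrix ι ι ℤ} (hA : Aᵀ = A) (hdiag : ∀ i, A i i = 0) (k : ℕ) (hk : 0 < k) :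
    2 ∣ (1 : ι → ℤ) ⬝ᵥ (A ^ k) *ᵥ 1 := by
  induction k using Nat.strong_induction_on with
  | _ k ih =>
    have hpow : ∀ r, (1 : ι → ℤ) ᵥ* A ^ r = A ^ r *ᵥ 1 := fun r => by
      rw [← Matrix.mulVec_transpose, Matrix.transpose_pow, hA]
    obtain ⟨r, rfl | rfl⟩ := Nat.even_or_odd' k
    · have h1 : (1 : ι → ℤ) ⬝ᵥ (A ^ (2 * r)) *ᵥ 1 = (A ^ r *ᵥ 1) ⬝ᵥ (A ^ r *ᵥ 1) := by
        rw [two_mul, pow_add, ← Matrix.mulVec_mulVec, Matrix.dotProduct_mulVec, hpow]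
      have h2 := ih r (by omega) (by omega)
      rw [h1, ← dvd_sub_left h2]
      simp only [dotProduct, Pi.one_apply, one_mul, ← Finset.sum_sub_distrib]
      refine Finset.dvd_sum fun i _ => ?_
      have h3 := Int.even_mul_pred_self ((A ^ r *ᵥ 1) i)
      rw [mul_sub, mul_one] at h3
      exact h3.two_dvd
    · have h1 : (1 : ι → ℤ) ⬝ᵥ (A ^ (2 * r + 1)) *ᵥ 1 = (A ^ r *ᵥ 1) ⬝ᵥ A *ᵥ (A ^ r *ᵥ 1) := by
        rw [show 2 * r + 1 = r + (1 + r) by ring, pow_add, pow_add, pow_one,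
          ← Matrix.mulVec_mulVec, ← Matrix.mulVec_mulVec, Matrix.dotProduct_mulVec, hpow]
      rw [h1]
      exact two_dvd_dotProduct_mulVec hA hdiag _

/-- If `det W = 2 ^ ⌊n/2⌋ * b` with `b ≠ 0`, then `2 * b ^ 2` annihilates the cokernel of the walk
matrix `W` of a symmetric integral matrix with zero diagonal. -/
theorem exists_walkMatrix_mul_eq {n : ℕ} {A : Matrix (Fin n) (Fin n) ℤ} (hA : Aᵀ = A)
    (hdiag : ∀ i, A i i = 0) {b : ℤ} (hb : (walkMatrix A).det = 2 ^ (n / 2) * b) (hb0 : b ≠ 0) :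
    ∃ N, walkMatrix A * N = (2 * b ^ 2) • (1 : Matrix (Fin n) (Fin n) ℤ) := by
  set W := walkMatrix A with hW
  have hgram : ∀ i j, (Wᵀ * W) i j = (1 : Fin n → ℤ) ⬝ᵥ (A ^ ((i : ℕ) + j)) *ᵥ 1 := by
    intro i j
    rw [pow_add, ← Matrix.mulVec_mulVec, Matrix.dotProduct_mulVec, ← Matrix.mulVec_transpose,
      Matrix.transpose_pow, hA]
    rfl
  obtain ⟨D, hDdet, hD⟩ : ∃ D : Fin n → ℤ,
      (Matrix.diagonal D).det * W.det ^ 2 = 2 ^ n * b ^ 2 ∧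
      ∀ i j, 2 ∣ D i * (Wᵀ * W) i j := by
    obtain ⟨m, rfl | rfl⟩ := Nat.even_or_odd' n
    · refine ⟨1, ?_, fun i j => ?_⟩
      · rw [hb]
        simp only [Matrix.diagonal_one', Matrix.det_one, show 2 * m / 2 = m by omega]
        ring
      · rw [hgram]
        by_cases h0 : 0 < (i : ℕ) + j
        · exact (two_dvd_one_dotProduct_pow_mulVec hA hdiag _ h0).mul_left _
        · rw [show (i : ℕ) + j = 0 by omega]
          simp
    · refine ⟨Fin.cons 2 1, ?_, fun i j => ?_⟩
      · rw [hb, Matrix.det_diagonal, Fin.prod_univ_succ, show (2 * m + 1) / 2 = m by omega]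
        simp only [Fin.cons_zero, Fin.cons_succ, Pi.one_apply, Finset.prod_const_one]
        ring
      · rw [hgram]
        refine Fin.cases ?_ (fun i => ?_) i
        · exact (dvd_refl _).mul_right _
        · exact (two_dvd_one_dotProduct_pow_mulVec hA hdiag _ (by simp)).mul_left _
  choose M hM using hD
  have hM' : Matrix.diagonal D * Wᵀ * W = (2 : ℤ) • Matrix.of M := by
    ext i j
    rw [Matrix.mul_assoc, Matrix.diagonal_mul, hM]
    simp
  have hMdet : (Matrix.of M).det = b ^ 2 := by
    have h := congrArg Matrix.det hM'
    rw [Matrix.det_mul, Matrix.det_mul, Matrix.det_transpose, mul_assoc, ← sq, hDdet,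
      Matrix.det_smul, Fintype.card_fin] at h
    exact (mul_left_cancel₀ (by positivity) h).symm
  refine ⟨(Matrix.of M).adjugate * (Matrix.diagonal D * Wᵀ), ?_⟩
  have hleft : (Matrix.of M).adjugate * (Matrix.diagonal D * Wᵀ) * W = (2 * b ^ 2) • 1 := by
    rw [Matrix.mul_assoc, hM', Matrix.mul_smul, Matrix.adjugate_mul, hMdet, mul_smul]
  have hdet : W.det ≠ 0 := by rw [hb]; positivity
  generalize (Matrix.of M).adjugate * (Matrix.diagonal D * Wᵀ) = N at hleft ⊢
  have h1 : W.det • (W * N) = W.det • ((2 * b ^ 2) • (1 : Matrix (Fin n) (Fin n) ℤ)) := by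
    calc W.det • (W * N) = W * (N * W) * W.adjugate := by
          rw [Matrix.mul_assoc, Matrix.mul_assoc, Matrix.mul_adjugate, Matrix.mul_smul,
            Matrix.mul_smul, Matrix.mul_one]
      _ = _ := by
          rw [hleft, Matrix.mul_smul, Matrix.mul_one, Matrix.smul_mul, Matrix.mul_adjugate,
            smul_comm]
  exact smul_right_injective _ hdet h1

theorem matrix_map_intCast_smul {ι κ : Type*} (c : ℤ) (M : Matrix ι κ ℤ) :
    (c • M).map (Int.castRingHom ℚ) = (c : ℚ) • M.map (Int.castRingHom ℚ) := by
  ext i j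
  rw [Matrix.map_apply, Matrix.smul_apply, smul_eq_mul, map_mul, Matrix.smul_apply,
    Matrix.map_apply, smul_eq_mul]
  rfl

theorem walkMatrix_map {n : ℕ} {R S : Type*} [CommRing R] [CommRing S] (f : R →+* S)
    (A : Matrix (Fin n) (Fin n) R) : (walkMatrix A).map f = walkMatrix (A.map f) := by
  ext i j
  have h : (fun _ : Fin n => (1 : S)) = f ∘ fun _ => (1 : R) := by ext; simp
  rw [Matrix.map_apply, walkMatrix, walkMatrix, Matrix.of_apply, Matrix.of_apply, h,
    ← Matrix.map_pow, RingHom.map_mulVec]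

/-- A left factor fixing the all-ones vector and intertwining `A` and `B` carries the walk matrix of
`A` to that of `B`. -/
theorem mul_walkMatrix_of_intertwine {n : ℕ} {R : Type*} [CommRing R]
    {P A B : Matrix (Fin n) (Fin n) R} (hP : P *ᵥ (fun _ => 1) = fun _ => 1)
    (hPA : P * A = B * P) : P * walkMatrix A = walkMatrix B := by
  have hpow : ∀ k : ℕ, P * A ^ k = B ^ k * P := by
    intro k
    induction k with
    | zero => simp
    | succ k ih => rw [pow_succ, ← Matrix.mul_assoc, ih, Matrix.mul_assoc, hPA, pow_succ,
        Matrix.mul_assoc]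
  ext i j
  have h : (P * walkMatrix A) i j = (P *ᵥ (A ^ (j : ℕ) *ᵥ fun _ => 1)) i := rfl
  rw [h, Matrix.mulVec_mulVec, hpow, ← Matrix.mulVec_mulVec, hP]
  rfl

/-- The level of a rational matrix divides every integer clearing its denominators. -/
theorem level_dvd {ι κ : Type*} {Q : Matrix ι κ ℚ} {ℓ : ℕ}
    (hlevel : IsLeast {m : ℕ | 0 < m ∧ ∀ i j, ∃ z : ℤ, (m : ℚ) * Q i j = (z : ℚ)} ℓ)
    {c : ℤ} (hc : ∀ i j, ∃ z : ℤ, (c : ℚ) * Q i j = (z : ℚ)) : (ℓ : ℤ) ∣ c := by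
  obtain ⟨⟨hpos, hint⟩, hmin⟩ := hlevel
  have hpos' : (0 : ℤ) < ℓ := by exact_mod_cast hpos
  by_contra hnd
  have hr0 : 0 < c % ℓ := Int.emod_pos_of_not_dvd hnd |>.resolve_left hpos'.ne'
  have hrl : c % ℓ < ℓ := Int.emod_lt_of_pos _ hpos'
  obtain ⟨r, hr⟩ := Int.eq_ofNat_of_zero_le hr0.le
  have hmem : ℓ ≤ r := hmin ⟨by omega, fun i j => by
    obtain ⟨z, hz⟩ := hint i j
    obtain ⟨y, hy⟩ := hc i j
    refine ⟨y - (c / ℓ) * z, ?_⟩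
    have h1 : (c : ℚ) = ℓ * (c / ℓ : ℤ) + r := by
      have := Int.mul_ediv_add_emod c ℓ
      rw [hr] at this
      exact_mod_cast this.symm
    push_cast
    rw [← hz, ← hy, h1]
    ring⟩
  omega

/-- If `G` is a controllable graph with `det(W)/2^⌊n/2⌋` an odd
square-free integer, then the level `ℓ` of any `Q ∈ 𝒬_G` equals `1` or `2`. -/
theorem stmt_17 {n : ℕ} (G : SimpleGraph (Fin n))
    (A : Matrix (Fin n) (Fin n) ℚ) (hA : A = adjMat ℚ G)
    (W : Matrix (Fin n) (Fin n) ℤ) (hW : W = walkMatrix (adjMat ℤ G))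
    (hctrl : W.det ≠ 0)
    (b : ℤ) (hb : W.det = 2 ^ (n / 2) * b) (hbodd : Odd b) (hbsf : Squarefree b)
    (Q : Matrix (Fin n) (Fin n) ℚ)
    (hQorth : Qᵀ * Q = 1) (hQe : Q *ᵥ (fun _ => 1) = fun _ => 1)
    (hsymm : (Qᵀ * A * Q).IsSymm)
    (h01 : ∀ i j, (Qᵀ * A * Q) i j = 0 ∨ (Qᵀ * A * Q) i j = 1)
    (hdiag : ∀ i, (Qᵀ * A * Q) i i = 0)
    (ℓ : ℕ)
    (hlevel : IsLeast {m : ℕ | 0 < m ∧ ∀ i j, ∃ z : ℤ, (m : ℚ) * Q i j = (z : ℚ)} ℓ) :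
    ℓ = 1 ∨ ℓ = 2 := by
  classical
  obtain ⟨hpos, hint⟩ := hlevel.1
  set Az := adjMat ℤ G with hAz
  have hAzsymm : Azᵀ = Az := by
    ext i j
    simp [hAz, adjMat, G.adj_comm]
  have hAzdiag : ∀ i, Az i i = 0 := fun i => by simp [hAz, adjMat]
  have hAmap : A = Az.map (Int.castRingHom ℚ) := by
    rw [hA]
    ext i j
    simp [hAz, adjMat, apply_ite (Int.cast : ℤ → ℚ)]
  have hb0 : b ≠ 0 := hbsf.ne_zero
  have hQorth' : Q * Qᵀ = 1 := mul_eq_one_comm.1 hQorth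
  choose Bz hBz using fun i j => (h01 i j).elim (fun h => (⟨0, by simp [h]⟩ :
    ∃ z : ℤ, (z : ℚ) = (Qᵀ * A * Q) i j)) (fun h => ⟨1, by simp [h]⟩)
  have hBmap : (Matrix.of Bz).map (Int.castRingHom ℚ) = Qᵀ * A * Q := by
    ext i j
    simp [hBz]
  set V := walkMatrix (Matrix.of Bz) with hV
  have hQW : Qᵀ * W.map (Int.castRingHom ℚ) = V.map (Int.castRingHom ℚ) := by
    rw [hW, hV, walkMatrix_map, walkMatrix_map, hBmap, ← hAmap]
    apply mul_walkMatrix_of_intertwine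
    · conv_lhs => rw [← hQe]
      rw [Matrix.mulVec_mulVec, hQorth, Matrix.one_mulVec]
    · rw [Matrix.mul_assoc, hQorth', Matrix.mul_one]
  obtain ⟨N, hN⟩ := exists_walkMatrix_mul_eq hAzsymm hAzdiag (hW ▸ hb) hb0
  rw [← hW] at hN
  have hdvd : (ℓ : ℤ) ∣ 2 * b ^ 2 := by
    refine level_dvd hlevel fun i j => ⟨(V * N) j i, ?_⟩
    have h1 : (V * N).map (Int.castRingHom ℚ) = ((2 * b ^ 2 : ℤ) : ℚ) • Qᵀ := by
      rw [Matrix.map_mul, ← hQW, Matrix.mul_assoc, ← Matrix.map_mul, hN, matrix_map_intCast_smul,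
        Matrix.map_one _ (map_zero _) (map_one _), Matrix.mul_smul, Matrix.mul_one]
    simpa using (congrFun (congrFun h1 j) i).symm
  choose U hU using hint
  have hUmap : (Matrix.of U).map (Int.castRingHom ℚ) = (ℓ : ℚ) • Q := by
    ext i j
    simp [hU]
  have hinj : Function.Injective fun M : Matrix (Fin n) (Fin n) ℤ => M.map (Int.castRingHom ℚ) :=
    Matrix.map_injective Int.cast_injective
  have hUW : (Matrix.of U)ᵀ * W = (ℓ : ℤ) • V := by
    apply hinj
    simp only
    rw [Matrix.map_mul, Matrix.transpose_map, hUmap, Matrix.transpose_smul, Matrix.smul_mul, hQW,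
      matrix_map_intCast_smul, Int.cast_natCast]
  have hUU : (Matrix.of U)ᵀ * Matrix.of U = (ℓ : ℤ) ^ 2 • (1 : Matrix (Fin n) (Fin n) ℤ) := by
    apply hinj
    simp only
    rw [Matrix.map_mul, Matrix.transpose_map, hUmap, Matrix.transpose_smul, Matrix.smul_mul,
      Matrix.mul_smul, hQorth, matrix_map_intCast_smul, Matrix.map_one _ (map_zero _) (map_one _),
      smul_smul, ← sq, Int.cast_pow, Int.cast_natCast]
  have hUA : (Matrix.of U)ᵀ * (Az * Matrix.of U) = (ℓ : ℤ) ^ 2 • Matrix.of Bz := by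
    apply hinj
    simp only
    rw [Matrix.map_mul, Matrix.map_mul, Matrix.transpose_map, hUmap, Matrix.transpose_smul,
      Matrix.smul_mul, Matrix.mul_smul, Matrix.mul_smul, ← hAmap, ← Matrix.mul_assoc, ← hBmap,
      matrix_map_intCast_smul, smul_smul, ← sq, Int.cast_pow, Int.cast_natCast]
  have hcop : IsCoprime (ℓ : ℤ) b := by
    refine isCoprime_of_prime_dvd (fun h => hb0 h.2) fun p hp hpl hpb => ?_
    have hp2 : ¬ p ∣ 2 := fun h => hp.not_dvd_one <| by
      obtain ⟨k, hk⟩ := hbodd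
      have := dvd_sub hpb (h.mul_right k)
      rwa [hk, add_sub_cancel_left] at this
    have hdet : ¬ p ^ 2 ∣ (walkMatrix Az).det := by
      rw [← hW, hb]
      intro h
      have h1 := hp.pow_dvd_of_dvd_mul_left 2 (fun h => hp2 (hp.dvd_of_dvd_pow h)) h
      exact hp.not_isUnit (hbsf p (by rwa [← sq]))
    have hUp : ∀ i j, p ∣ U i j := by
      intro i j
      refine dvd_of_dvd_vecMul_walkMatrix hAzsymm hp (hW ▸ hb ▸ hpb.mul_left _) hdet
        (u := fun i => U i j) (fun k => ?_) ?_ ?_ i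
      · rw [← hW]
        have h1 : ((fun i => U i j) ᵥ* W) k = ((Matrix.of U)ᵀ * W) j k := rfl
        rw [h1, hUW]
        exact hpl.mul_right _
      · have h1 : (fun i => U i j) ⬝ᵥ (fun i => U i j) = ((Matrix.of U)ᵀ * Matrix.of U) j j := rfl
        rw [h1, hUU]
        exact (pow_dvd_pow_of_dvd hpl 2).mul_right _
      · have h1 : (fun i => U i j) ⬝ᵥ Az *ᵥ (fun i => U i j) =
          ((Matrix.of U)ᵀ * (Az * Matrix.of U)) j j := rfl
        rw [h1, hUA]
        exact (pow_dvd_pow_of_dvd hpl 2).mul_right _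
    obtain ⟨c, hc⟩ := hpl
    choose Y hY using hUp
    have hlc : (ℓ : ℤ) ∣ c := by
      refine level_dvd hlevel fun i j => ⟨Y i j, ?_⟩
      have h1 : (p : ℚ) ≠ 0 := by exact_mod_cast hp.ne_zero
      have h2 : (ℓ : ℚ) = p * c := by exact_mod_cast hc
      have h3 := hU i j
      rw [hY i j, h2] at h3
      push_cast at h3
      rw [mul_assoc] at h3
      exact mul_left_cancel₀ h1 h3
    obtain ⟨r, hr⟩ := hlc
    have hl0 : (ℓ : ℤ) ≠ 0 := by exact_mod_cast hpos.ne'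
    exact hp.not_dvd_one ⟨r, mul_left_cancel₀ hl0 (by rw [mul_one]; nth_rw 1 [hc, hr]; ring)⟩
  have h2 : (ℓ : ℤ) ∣ 2 := hcop.pow_right.dvd_of_dvd_mul_right hdvd
  exact (Nat.dvd_prime Nat.prime_two).1 (by exact_mod_cast h2)
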